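/- For all natural numbers L, K with K ≥ 1 and every natural number s, the number of command vectors c : Fin L → Fin K with Σ_l (c(l) : ℕ) = s is at most the number of command vectors c : Fin L → Fin K with Σ_l (c(l) : ℕ) = ⌊L·(K−1)/2⌋. In particular the central input unit receives at least as many output-to-input paths as any other input unit. -/

import Mathlib

/-!
The path counts are obtained from the indicator of the offset `0` by replacing `f`, once per layer,
with the window sum `s ↦ f s + f (s - 1) + ⋯ + f (s - (n - 1))`, where `n` is the kernel size. This
operation preserves being symmetric and unimodal and moves the centre by `(n - 1) / 2`: when the
window advances from `s` to `s + 1`, it gains `f (s + 1)` and loses `f (s - (n - 1))`, and in the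
left half the gained position is at least as close to the centre of `f` as the lost one.
-/

/-- `f` is symmetric and unimodal about `m / 2`: its value can only grow as the argument gets closer
to `m / 2`, and arguments at equal distance share a value. Recording twice the centre allows
half-integral centres. -/
def IsSymmUnimodal {α : Type*} [LE α] (f : ℤ → α) (m : ℤ) : Prop :=
  ∀ ⦃a b : ℤ⦄, |2 * b - m| ≤ |2 * a - m| → f a ≤ f b

namespace IsSymmUnimodal

variable {α : Type*} {f : ℤ → α} {m : ℤ}

lemma of_symm_of_le_add_one [Preorder α] (hsymm : ∀ s, f (m - s) = f s)
    (hstep : ∀ s, 2 * (s + 1) ≤ m → f s ≤ f (s + 1)) : IsSymmUnimodal f m := by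
  intro a b hab
  have left_mono : MonotoneOn f (Set.Iic (m / 2)) :=
    monotoneOn_of_le_add_one Set.ordConnected_Iic fun s _ _ hs =>
      hstep s (by have := Set.mem_Iic.1 hs; omega)
  have apply_min (s : ℤ) : f (min s (m - s)) = f s := by
    rcases min_choice s (m - s) with h | h <;> simp only [h, hsymm]
  have min_mem (s : ℤ) : min s (m - s) ∈ Set.Iic (m / 2) := by
    rw [Set.mem_Iic]; omega
  calc
    f a = f (min a (m - a)) := (apply_min a).symm
    _ ≤ f (min b (m - b)) := left_mono (min_mem a) (min_mem b) (by grind)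
    _ = f b := apply_min b

lemma symm [PartialOrder α] (hf : IsSymmUnimodal f m) (s : ℤ) : f (m - s) = f s := by
  have dist_eq : |2 * (m - s) - m| = |2 * s - m| := by grind
  exact le_antisymm (hf dist_eq.ge) (hf dist_eq.le)

lemma apply_le_apply_ediv_two [LE α] (hf : IsSymmUnimodal f m) (s : ℤ) : f s ≤ f (m / 2) :=
  -- `2 * s - m` has the parity of `m`, so its absolute value is at least `m % 2`.
  hf (by grind)

lemma sum_sub [AddCommMonoid α] [PartialOrder α] [IsOrderedAddMonoid α]
    (hf : IsSymmUnimodal f m) (n : ℕ) :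
    IsSymmUnimodal (fun s => ∑ j : Fin n, f (s - (j : ℕ))) (m + (n - 1)) := by
  refine of_symm_of_le_add_one (fun s => ?_) fun s hs => ?_
  · rw [← Equiv.sum_comp Fin.revPerm]
    refine Finset.sum_congr rfl fun j _ => ?_
    rw [← hf.symm (s - (j : ℕ)), Fin.revPerm_apply, Fin.val_rev]
    congr 1
    omega
  · cases n with
    | zero => simp
    | succ k =>
      have lost_le_gained : f (s - k) ≤ f (s + 1) := hf (by grind)
      calc
        ∑ j : Fin (k + 1), f (s - (j : ℕ))
          = ∑ j : Fin k, f (s - (j : ℕ)) + f (s - k) := Fin.sum_univ_castSucc _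
        _ ≤ ∑ j : Fin k, f (s - (j : ℕ)) + f (s + 1) := by gcongr
        _ = ∑ j : Fin (k + 1), f (s + 1 - (j : ℕ)) := by
          simp [Fin.sum_univ_succ, add_comm]

end IsSymmUnimodal

/-- The number of output-to-input paths reaching offset `s` in a network whose layer `l` has kernel
size `K l`. Offsets are integers so that shifting them does not truncate. -/
def pathCount {L : ℕ} (K : Fin L → ℕ) (s : ℤ) : ℕ :=
  (Finset.univ.filter fun c : ∀ l, Fin (K l) => ∑ l, ((c l : ℕ) : ℤ) = s).card

lemma pathCount_natCast {L : ℕ} (K : Fin L → ℕ) (s : ℕ) :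
    pathCount K s =
      (Finset.univ.filter fun c : ∀ l, Fin (K l) => ∑ l, (c l : ℕ) = s).card := by
  simp only [pathCount, ← Nat.cast_sum, Nat.cast_inj]

lemma pathCount_fin_zero (K : Fin 0 → ℕ) (s : ℤ) : pathCount K s = if s = 0 then 1 else 0 := by
  by_cases hs : s = 0 <;> simp [pathCount, hs, eq_comm]

lemma pathCount_fin_succ {L : ℕ} (K : Fin (L + 1) → ℕ) (s : ℤ) :
    pathCount K s = ∑ j : Fin (K 0), pathCount (Fin.tail K) (s - (j : ℕ)) := by
  simp only [pathCount, Finset.card_filter]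
  rw [← (Fin.consEquiv fun l => Fin (K l)).sum_comp, Fintype.sum_prod_type]
  simp only [Fin.consEquiv_apply, Fin.sum_univ_succ, Fin.cons_zero, Fin.cons_succ,
    eq_sub_iff_add_eq', Fin.tail]
  rfl

lemma isSymmUnimodal_pathCount {L : ℕ} (K : Fin L → ℕ) :
    IsSymmUnimodal (pathCount K) (∑ l, ((K l : ℤ) - 1)) := by
  induction L with
  | zero =>
    intro a b hab
    simp only [pathCount_fin_zero, Finset.univ_eq_empty, Finset.sum_empty] at hab ⊢
    grind
  | succ L ih =>
    rw [funext (pathCount_fin_succ K), Fin.sum_univ_succ, add_comm ((K 0 : ℤ) - 1)]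
    exact (ih (Fin.tail K)).sum_sub (K 0)

theorem card_command_vectors_le_central_general {L : ℕ} (K : Fin L → ℕ) (hK : ∀ l, 1 ≤ K l)
    (s : ℕ) :
    (Finset.univ.filter fun c : ∀ l, Fin (K l) => ∑ l, (c l : ℕ) = s).card ≤
      (Finset.univ.filter fun c : ∀ l, Fin (K l) =>
        ∑ l, (c l : ℕ) = (∑ l, (K l - 1)) / 2).card := by
  have centre_eq : (((∑ l, (K l - 1)) / 2 : ℕ) : ℤ) = (∑ l, ((K l : ℤ) - 1)) / 2 := by
    simp [Nat.cast_sub (hK _)]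
  rw [← pathCount_natCast, ← pathCount_natCast, centre_eq]
  exact (isSymmUnimodal_pathCount K).apply_le_apply_ediv_two s

/-- the central input unit receives at least as many output-to-input paths
as any other input unit. For every offset `s`, the number of command vectors
`c : Fin L → Fin K` with `Σ_l c l = s` is at most the number of those with
`Σ_l c l = ⌊L·(K−1)/2⌋`. -/
theorem card_command_vectors_le_central (L K : ℕ) (hK : 1 ≤ K) (s : ℕ) :
    (Finset.univ.filter
        (fun c : Fin L → Fin K => ∑ l : Fin L, (c l : ℕ) = s)).card ≤
      (Finset.univ.filter
        (fun c : Fin L → Fin K => ∑ l : Fin L, (c l : ℕ) = L * (K - 1) / 2)).card := by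
  simpa using card_command_vectors_le_central_general (fun _ : Fin L => K) (fun _ => hK) s
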